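/- If the diagonal entries D_1, …, D_n are pairwise distinct, then no D_k (k = 1, …, n) is an eigenvalue of A = D + J. -/

import Mathlib

/-- If the diagonal entries `D_1, …, D_n` (`n = 2p`) are pairwise distinct, then no `D_k`
is an eigenvalue of `A = D + J`, where `J` is the all-ones matrix. -/
theorem stmt1 (p : ℕ) (hp : 1 ≤ p) (D : Fin (2*p) → ℂ)
    (hD : Function.Injective D) (k : Fin (2*p)) :
    ¬ ∃ W : Fin (2*p) → ℂ, W ≠ 0 ∧
      (Matrix.diagonal D + Matrix.of fun _ _ => (1 : ℂ)).mulVec W = D k • W := by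
  rintro ⟨W, hW, h⟩
  have row : ∀ i, D i * W i + ∑ j, W j = D k * W i := by
    intro i
    have := congrFun h i
    rw [Matrix.add_mulVec, Pi.add_apply, Matrix.mulVec_diagonal] at this
    simpa [Matrix.mulVec, dotProduct] using this
  have hS : ∑ j, W j = 0 := by
    have := row k
    linear_combination this
  have hz : ∀ i, i ≠ k → W i = 0 := by
    intro i hi
    have h1 : (D i - D k) * W i = 0 := by
      linear_combination row i - hS
    rcases mul_eq_zero.mp h1 with h2 | h2
    · exact absurd (hD (sub_eq_zero.mp h2)) hi
    · exact h2
  have hk : W k = 0 := by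
    rw [← hS]
    exact (Finset.sum_eq_single k (fun i _ hi => hz i hi) (by simp)).symm
  apply hW
  funext i
  by_cases hi : i = k
  · rw [hi]; exact hk
  · exact hz i hi
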